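/- Suppose (V,d) is a finite metric space that is the effective resistance of a graph (V,c). Then det A_y = det M_y' > 0 for every y ∈ V, where A_y(x,z) = 1 if x = y = z and (d(x,y)+d(y,z)-d(x,z))/2 otherwise, and M_y' is the matrix ((d(x,y)+d(y,z)-d(x,z))/2) restricted to (V \ {y})². -/

import Mathlib

def IsMetric {W : Type*} (d : W → W → ℝ) : Prop :=
  (∀ x y, 0 ≤ d x y) ∧ (∀ x y, d x y = 0 ↔ x = y) ∧
  (∀ x y, d x y = d y x) ∧ (∀ x y z, d x z ≤ d x y + d y z)

noncomputable def Mdef {W : Type*} (d : W → W → ℝ) (y x z : W) : ℝ :=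
  (d x y + d y z - d x z) / 2

noncomputable def deg {W : Type*} [Fintype W] (c : W → W → ℝ) (x : W) : ℝ := ∑ y, c x y

def IsWeight {W : Type*} (c : W → W → ℝ) : Prop :=
  (∀ x y, 0 ≤ c x y) ∧ (∀ x y, c x y = c y x) ∧ (∀ x, c x x = 0)

def Conn {W : Type*} (c : W → W → ℝ) : Prop :=
  ∀ x y, Relation.ReflTransGen (fun a b => 0 < c a b) x y

noncomputable def lap {W : Type*} [Fintype W] (c : W → W → ℝ) (φ : W → ℝ) (x : W) : ℝ :=
  φ x - ∑ y, (c x y / deg c x) * φ y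

def IsDirichlet {W : Type*} [Fintype W] [DecidableEq W] (c : W → W → ℝ) (x y : W)
    (φ : W → ℝ) : Prop :=
  (∀ z, lap c φ z =
      (if z = x then 1 / deg c x else 0) - (if z = y then 1 / deg c y else 0)) ∧
  φ y = 0

def IsEffRes {W : Type*} [Fintype W] [DecidableEq W] (c : W → W → ℝ) (R : W → W → ℝ) : Prop :=
  (∀ x, R x x = 0) ∧ ∀ x y, x ≠ y → ∃ φ, IsDirichlet c x y φ ∧ φ x = R x y

noncomputable def Amat {W : Type*} [DecidableEq W] (d : W → W → ℝ) (y : W) : Matrix W W ℝ :=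
  Matrix.of fun x z => if x = y ∧ z = y then 1 else (d x y + d y z - d x z) / 2

noncomputable def Mres {W : Type*} (d : W → W → ℝ) (y : W) :
    Matrix {z : W // z ≠ y} {z : W // z ≠ y} ℝ :=
  Matrix.of fun a b => (d a.1 y + d y b.1 - d a.1 b.1) / 2

noncomputable def bvec {W : Type*} [DecidableEq W] (y : W) : W → ℝ :=
  fun x => if x = y then 0 else 1

/-- Unnormalised Laplacian. -/
noncomputable def uL {W : Type*} [Fintype W] (c : W → W → ℝ) (φ : W → ℝ) (z : W) : ℝ :=
  ∑ w, c z w * (φ z - φ w)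

lemma uL_eq {W : Type*} [Fintype W] (c : W → W → ℝ) (hdeg : ∀ x, 0 < deg c x)
    (φ : W → ℝ) (z : W) : uL c φ z = deg c z * lap c φ z := by
  have h := (hdeg z).ne'
  unfold uL lap
  rw [mul_sub, Finset.mul_sum]
  simp only [mul_sub, Finset.sum_sub_distrib]
  congr 1
  · rw [← Finset.sum_mul]; rfl
  · refine Finset.sum_congr rfl fun w _ => ?_
    field_simp

lemma uL_energy {W : Type*} [Fintype W] (c : W → W → ℝ) (hs : ∀ x y, c x y = c y x)
    (φ ψ : W → ℝ) :
    ∑ z, ψ z * uL c φ z = (∑ z, ∑ w, c z w * ((φ z - φ w) * (ψ z - ψ w))) / 2 := by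
  have h1 : ∑ z, ψ z * uL c φ z = ∑ z, ∑ w, c z w * ((φ z - φ w) * ψ z) := by
    unfold uL
    refine Finset.sum_congr rfl fun z _ => ?_
    rw [Finset.mul_sum]
    exact Finset.sum_congr rfl fun w _ => by ring
  have h2 : ∑ z, ∑ w, c z w * ((φ z - φ w) * ψ z)
      = - ∑ z, ∑ w, c z w * ((φ z - φ w) * ψ w) := by
    rw [Finset.sum_comm]
    simp only [← Finset.sum_neg_distrib]
    refine Finset.sum_congr rfl fun z _ => Finset.sum_congr rfl fun w _ => ?_
    rw [hs w z]; ring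
  have h3 : ∑ z, ∑ w, c z w * ((φ z - φ w) * (ψ z - ψ w))
      = ∑ z, ∑ w, c z w * ((φ z - φ w) * ψ z) - ∑ z, ∑ w, c z w * ((φ z - φ w) * ψ w) := by
    simp only [← Finset.sum_sub_distrib]
    refine Finset.sum_congr rfl fun z _ => Finset.sum_congr rfl fun w _ => ?_
    ring
  rw [h1, h3]; linarith

lemma uL_symm {W : Type*} [Fintype W] (c : W → W → ℝ) (hs : ∀ x y, c x y = c y x)
    (φ ψ : W → ℝ) : ∑ z, ψ z * uL c φ z = ∑ z, φ z * uL c ψ z := by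
  rw [uL_energy c hs, uL_energy c hs]
  congr 1
  exact Finset.sum_congr rfl fun z _ => Finset.sum_congr rfl fun w _ => by ring

lemma uL_nonneg {W : Type*} [Fintype W] (c : W → W → ℝ) (hw : IsWeight c)
    (φ : W → ℝ) : 0 ≤ ∑ z, φ z * uL c φ z := by
  rw [uL_energy c hw.2.1]
  have : 0 ≤ ∑ z, ∑ w, c z w * ((φ z - φ w) * (φ z - φ w)) :=
    Finset.sum_nonneg fun z _ => Finset.sum_nonneg fun w _ =>
      mul_nonneg (hw.1 z w) (mul_self_nonneg _)
  linarith

lemma uL_zero {W : Type*} [Fintype W] (c : W → W → ℝ) (hw : IsWeight c)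
    (φ : W → ℝ) (h0 : ∑ z, φ z * uL c φ z = 0) (z : W) : uL c φ z = 0 := by
  rw [uL_energy c hw.2.1] at h0
  have h1 : ∑ z, ∑ w, c z w * ((φ z - φ w) * (φ z - φ w)) = 0 := by linarith
  have hn : ∀ z w, 0 ≤ c z w * ((φ z - φ w) * (φ z - φ w)) := fun z w =>
    mul_nonneg (hw.1 z w) (mul_self_nonneg _)
  rw [Finset.sum_eq_zero_iff_of_nonneg
    (fun z _ => Finset.sum_nonneg fun w _ => hn z w)] at h1
  have h2 := h1 z (Finset.mem_univ z)
  rw [Finset.sum_eq_zero_iff_of_nonneg (fun w _ => hn z w)] at h2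
  refine Finset.sum_eq_zero fun w hw' => ?_
  have h3 := h2 w hw'
  rw [← mul_assoc, mul_eq_zero] at h3
  rcases h3 with h | h
  · exact h
  · rw [h, mul_zero]

lemma exists_pot {V : Type*} [Fintype V] [DecidableEq V] (d c : V → V → ℝ)
    (hdeg : ∀ x, 0 < deg c x) (heff : IsEffRes c d) (x y : V) :
    ∃ φ : V → ℝ, (∀ z, uL c φ z = (if z = x then 1 else 0) - (if z = y then 1 else 0)) ∧
      φ y = 0 ∧ φ x = d x y := by
  by_cases hxy : x = y
  · subst hxy
    exact ⟨fun _ => 0, fun z => by simp [uL], rfl, (heff.1 x).symm⟩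
  · obtain ⟨φ, ⟨h1, h2⟩, h3⟩ := heff.2 x y hxy
    refine ⟨φ, fun z => ?_, h2, h3⟩
    rw [uL_eq c hdeg, h1, mul_sub]
    have h := (hdeg z).ne'
    congr 1
    · split_ifs with hz
      · subst hz; field_simp
      · simp
    · split_ifs with hz
      · subst hz; field_simp
      · simp

lemma pair_pot {V : Type*} [Fintype V] [DecidableEq V] (c : V → V → ℝ) (φ ψ : V → ℝ) (x y : V)
    (h : ∀ z, uL c φ z = (if z = x then 1 else 0) - (if z = y then 1 else 0)) :
    ∑ z, ψ z * uL c φ z = ψ x - ψ y := by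
  simp [h, mul_sub, Finset.sum_sub_distrib]

lemma Mres_posDef {V : Type*} [Fintype V] [DecidableEq V] (d : V → V → ℝ) (hd : IsMetric d)
    (c : V → V → ℝ) (hw : IsWeight c) (hdeg : ∀ x, 0 < deg c x)
    (heff : IsEffRes c d) (y : V) : (Mres d y).PosDef := by
  choose φ hφ hφy hφx using fun x => exists_pot d c hdeg heff x y
  have hsym : ∀ x z, φ x z = φ z x := by
    intro x z
    have h1 := pair_pot c (φ x) (φ z) x y (hφ x)
    have h2 := pair_pot c (φ z) (φ x) z y (hφ z)
    rw [uL_symm c hw.2.1, h2, hφy, hφy] at h1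
    linarith
  have hM : ∀ x z, (d x y + d y z - d x z) / 2 = φ z x := by
    intro x z
    obtain ⟨ψ, hψ, hψz, hψx⟩ := exists_pot d c hdeg heff x z
    have e1 := pair_pot c (φ x) ψ x y (hφ x)
    have e2 := pair_pot c (φ z) ψ z y (hφ z)
    rw [uL_symm c hw.2.1, pair_pot c ψ _ x z hψ] at e1 e2
    rw [hφx] at e1 e2
    have := hsym x z
    rw [hd.2.2.1 y z]
    linarith
  refine Matrix.PosDef.of_dotProduct_mulVec_pos ?_ ?_
  · ext a b
    simp only [Matrix.conjTranspose_apply, Mres, Matrix.of_apply, hM, star_trivial]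
    exact hsym _ _
  · intro v hv
    set f : V → ℝ := fun z => ∑ a, v a * φ a.1 z with hf
    have hLf : ∀ z, uL c f z = ∑ a, v a * uL c (φ a.1) z := by
      intro z
      simp only [uL, hf, ← Finset.sum_sub_distrib, Finset.mul_sum]
      rw [Finset.sum_comm]
      exact Finset.sum_congr rfl fun a _ => Finset.sum_congr rfl fun w _ => by ring
    have hE : star v ⬝ᵥ (Mres d y).mulVec v = ∑ z, f z * uL c f z := by
      have : ∑ z, f z * uL c f z = ∑ a, v a * ∑ z, f z * uL c (φ a.1) z := by
        simp only [hLf, Finset.mul_sum]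
        rw [Finset.sum_comm]
        exact Finset.sum_congr rfl fun a _ => Finset.sum_congr rfl fun w _ => by ring
      rw [this]
      simp only [dotProduct, Matrix.mulVec, star_trivial]
      refine Finset.sum_congr rfl fun a _ => ?_
      rw [pair_pot c _ f a.1 y (hφ a.1)]
      have hfy : f y = 0 := by simp [hf, hφy]
      rw [hfy, sub_zero]
      congr 1
      refine Finset.sum_congr rfl fun b _ => ?_
      simp only [Mres, Matrix.of_apply, hM]
      ring
    rw [hE]
    refine lt_of_le_of_ne (uL_nonneg c hw f) fun h0 => hv ?_
    funext a
    have h := uL_zero c hw f h0.symm a.1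
    rw [hLf] at h
    simp only [hφ, a.2, if_false, sub_zero] at h
    simpa [← Subtype.ext_iff] using h

lemma Amat_det {V : Type*} [Fintype V] [DecidableEq V] (d : V → V → ℝ) (hd : IsMetric d)
    (y : V) : (Amat d y).det = (Mres d y).det := by
  have hyy : d y y = 0 := (hd.2.1 y y).2 rfl
  rw [Matrix.twoBlockTriangular_det (Amat d y) (fun i => i = y)]
  · have h1 : Matrix.toSquareBlockProp (Amat d y) (fun i => i = y) = 1 := by
      ext ⟨a, rfl⟩ ⟨b, rfl⟩
      simp [Matrix.toSquareBlockProp, Amat]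
    rw [h1, @Matrix.det_one _ _ (_) _ _, one_mul]
    have h2 : Matrix.toSquareBlockProp (Amat d y) (fun i => ¬ i = y) = Mres d y := by
      ext ⟨a, ha⟩ ⟨b, hb⟩
      simp [Matrix.toSquareBlockProp, Amat, Mres, ha]
    rw [h2]
  · intro i hi j hj
    subst hj
    simp [Amat, hi, hyy]

theorem stmt13 {V : Type*} [Fintype V] [DecidableEq V] (d : V → V → ℝ) (hd : IsMetric d)
    (c : V → V → ℝ) (hw : IsWeight c) (hconn : Conn c) (hdeg : ∀ x, 0 < deg c x)
    (heff : IsEffRes c d) :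
    ∀ y : V, (Amat d y).det = (Mres d y).det ∧ 0 < (Amat d y).det := by
  intro y
  have h := Amat_det d hd y
  exact ⟨h, h ▸ (Mres_posDef d hd c hw hdeg heff y).det_pos⟩
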